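/- Let |t⟩ = ((|↑⟩ + |↓⟩)/√2)^{⊗N} be the coherent half-up product state of N ≥ 1 qubits and let |t'⟩ be the normalization of Σ_{k=1}^N σ₊^{(k)} |t⟩, where σ₊^{(k)} = |↑⟩⟨↓| acts on site k. Then |⟨t|t'⟩|² = N/(N+1), and consequently the trace distance between the corresponding pure states is (1/2)·‖ |t'⟩⟨t'| − |t⟩⟨t| ‖₁ = 1/√(N+1). -/

import Mathlib

/-!
The amplitudes of `|t⟩` all equal `2^{-N/2}`, so the collective raising operator acts on `|t⟩` by
multiplying the amplitude at `x` with the number `X` of up spins in `x`, and inner products of such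
multiples of `|t⟩` are averages over the uniform distribution on configurations.
Hence the raised state `|w⟩` satisfies `⟨t|w⟩ = 𝔼 X = N/2` and `⟨w|w⟩ = 𝔼 X² = N(N+1)/4`, the
first two moments of the binomial variable `X`.

For unit vectors with projections `P`, `Q` and overlap `s = |⟨v|u⟩|²`, the relations `PQP = sP` and
`QPQ = sQ` give `(P - Q)³ = (1 - s)(P - Q)`. So every nonzero singular value of `P - Q` equals
`√(1 - s)`, and `Tr (P - Q)² = 2(1 - s)` counts them.
-/

open scoped BigOperators Kronecker Matrix ComplexOrder

noncomputable section
namespace Paper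

/-- A density matrix: a positive semidefinite operator of trace one. -/
def IsDensityMatrix {n : Type*} [Fintype n] (ρ : Matrix n n ℂ) : Prop :=
  ρ.PosSemidef ∧ ρ.trace = 1

/-- The operator norm `‖A‖_∞` (largest singular value) of a matrix,
as the operator norm of the induced map on Euclidean space. -/
noncomputable def opNorm {n : Type*} [Fintype n] [DecidableEq n] (A : Matrix n n ℂ) : ℝ :=
  ‖LinearMap.toContinuousLinearMap (Matrix.toEuclideanLin A)‖

/-- Von Neumann entropy `−∑ λ ln λ` over the eigenvalues; since `Real.log 0 = 0`
in Mathlib, the convention `0 · ln 0 = 0` is automatic. -/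
noncomputable def entropy {n : Type*} [Fintype n] [DecidableEq n] (σ : Matrix n n ℂ) : ℝ :=
  if h : σ.IsHermitian then -∑ i, h.eigenvalues i * Real.log (h.eigenvalues i) else 0

/-- The variance `Var_ρ(A) = Tr[ρ A† A] − |Tr[ρ A]|²`. -/
noncomputable def variance {n : Type*} [Fintype n] (ρ A : Matrix n n ℂ) : ℝ :=
  (ρ * (Aᴴ * A)).trace.re - ‖(ρ * A).trace‖ ^ 2

/-- The trace norm `‖A‖₁ = Tr √(A†A)`: the sum of the singular values. -/
noncomputable def traceNorm {n : Type*} [Fintype n] [DecidableEq n] (A : Matrix n n ℂ) : ℝ :=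
  ∑ i, Real.sqrt ((Matrix.posSemidef_conjTranspose_mul_self A).1.eigenvalues i)

/-- The pure state `|v⟩⟨v|` associated with a vector `v`. -/
def pureState {n : Type*} (v : n → ℂ) : Matrix n n ℂ :=
  Matrix.of fun x y => v x * (starRingEnd ℂ) (v y)

/-- The expectation value `⟨v|M|v⟩`. -/
noncomputable def expval {n : Type*} [Fintype n] (M : Matrix n n ℂ) (v : n → ℂ) : ℂ :=
  ∑ x, ∑ y, (starRingEnd ℂ) (v x) * M x y * v y

variable {N : ℕ} {d : Fin N → Type*} [∀ k, Fintype (d k)] [∀ k, DecidableEq (d k)]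

/-- Extension of a local operator on the `k`-th factor to the `N`-fold tensor
product `H = H_1 ⊗ ⋯ ⊗ H_N`, tensoring with the identity on every other factor.
(The tensor product is realized with index set `∀ j, d j`.) -/
def extendAt (k : Fin N) (A : Matrix (d k) (d k) ℂ) : Matrix (∀ j, d j) (∀ j, d j) ℂ :=
  Matrix.of fun x y => if ∀ j, j ≠ k → x j = y j then A (x k) (y k) else 0

/-- Reduced density matrix on the `k`-th factor: partial trace over all other factors. -/
noncomputable def reduce (k : Fin N) (ρ : Matrix (∀ j, d j) (∀ j, d j) ℂ) :
    Matrix (d k) (d k) ℂ :=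
  Matrix.of fun a b => ∑ x : ∀ j, d j, if x k = a then ρ x (Function.update x k b) else 0

/-- The raising operator `σ₊ = |↑⟩⟨↓|` on one qubit (`true` plays the role of `|↑⟩`). -/
def sigmaPlus : Matrix Bool Bool ℂ :=
  Matrix.of fun a b => if a = true ∧ b = false then 1 else 0

/-- The coherent half-up product state `((|↑⟩ + |↓⟩)/√2)^{⊗N}` of `N` qubits:
every amplitude equals `2^{−N/2}`. -/
noncomputable def coherentHalfUp (N : ℕ) : (Fin N → Bool) → ℂ :=
  fun _ => ((Real.sqrt 2 : ℂ))⁻¹ ^ N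

section TraceNorm

variable {n : Type*} [Fintype n] [DecidableEq n]

theorem eigenvalues_isRoot_of_aeval_eq_zero {𝕜 : Type*} [RCLike 𝕜] {A : Matrix n n 𝕜}
    (hA : A.IsHermitian) {p : Polynomial ℝ} (hp : Polynomial.aeval A p = 0) (i : n) :
    p.IsRoot (hA.eigenvalues i) := by
  have : Nonempty n := ⟨i⟩
  have h_mem : p.eval (hA.eigenvalues i) ∈ spectrum ℝ (Polynomial.aeval A p) :=
    spectrum.subset_polynomial_aeval A p ⟨_, hA.eigenvalues_mem_spectrum_real i, rfl⟩
  rwa [hp, spectrum.zero_eq, Set.mem_singleton_iff] at h_mem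

theorem eigenvalues_mul_self_of_mul_self_eq_smul {𝕜 : Type*} [RCLike 𝕜] {A : Matrix n n 𝕜}
    (hA : A.IsHermitian) {κ : ℝ} (h : A * A = κ • A) (i : n) :
    hA.eigenvalues i * hA.eigenvalues i = κ * hA.eigenvalues i := by
  have h_aeval : Polynomial.aeval A
      (Polynomial.X * Polynomial.X - Polynomial.C κ * Polynomial.X) = 0 := by
    simp only [map_sub, map_mul, Polynomial.aeval_X, Polynomial.aeval_C, h,
      ← Algebra.smul_def, sub_self]
  simpa [sub_eq_zero] using eigenvalues_isRoot_of_aeval_eq_zero hA h_aeval i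

theorem traceNorm_eq_of_mul_conjTranspose_mul_self {A : Matrix n n ℂ} {κ : ℝ}
    (h : A * Aᴴ * A = κ • A) : traceNorm A = (Aᴴ * A).trace.re / √κ := by
  have hA := (Matrix.posSemidef_conjTranspose_mul_self A).1
  have h_gram : Aᴴ * A * (Aᴴ * A) = κ • (Aᴴ * A) := by
    rw [mul_assoc, ← mul_assoc A, h, mul_smul_comm]
  have h_sqrt (i : n) : √(hA.eigenvalues i) = hA.eigenvalues i / √κ := by
    rcases eq_or_ne (hA.eigenvalues i) 0 with h_zero | h_ne
    · simp [h_zero]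
    · rw [mul_right_cancel₀ h_ne (eigenvalues_mul_self_of_mul_self_eq_smul hA h_gram i),
        Real.div_sqrt]
  calc traceNorm A = (∑ i, hA.eigenvalues i) / √κ := by
        simp only [traceNorm, h_sqrt, Finset.sum_div]
    _ = (Aᴴ * A).trace.re / √κ := by simp [hA.trace_eq_sum_eigenvalues]

end TraceNorm

section PureStates

theorem sub_mul_sub_mul_sub_of_isIdempotentElem {R : Type*} [NonUnitalRing R] {p q : R}
    (hp : IsIdempotentElem p) (hq : IsIdempotentElem q) :
    (p - q) * (p - q) * (p - q) = p - q - p * q * p + q * p * q := by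
  simp only [sub_mul, mul_sub, hp.eq, hq.eq, mul_assoc]
  abel

theorem pureState_eq_vecMulVec {n : Type*} (v : n → ℂ) :
    pureState v = Matrix.vecMulVec v (star v) := rfl

theorem isHermitian_pureState {n : Type*} (v : n → ℂ) : (pureState v).IsHermitian := by
  rw [Matrix.IsHermitian, pureState_eq_vecMulVec, Matrix.conjTranspose_vecMulVec, star_star]

variable {n : Type*} [Fintype n]

theorem norm_star_dotProduct_comm {𝕜 : Type*} [RCLike 𝕜] (u v : n → 𝕜) :
    ‖star u ⬝ᵥ v‖ = ‖star v ⬝ᵥ u‖ := by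
  rw [Matrix.star_dotProduct, norm_star]

theorem pureState_mul_pureState (u v : n → ℂ) :
    pureState u * pureState v = (star u ⬝ᵥ v) • Matrix.vecMulVec u (star v) := by
  rw [pureState_eq_vecMulVec, pureState_eq_vecMulVec, Matrix.vecMulVec_mul_vecMulVec,
    Matrix.vecMulVec_smul]

theorem isIdempotentElem_pureState {v : n → ℂ} (hv : star v ⬝ᵥ v = 1) :
    IsIdempotentElem (pureState v) := by
  rw [IsIdempotentElem, pureState_mul_pureState, hv, one_smul, pureState_eq_vecMulVec]

theorem trace_pureState (v : n → ℂ) : (pureState v).trace = star v ⬝ᵥ v :=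
  (Matrix.trace_vecMulVec v (star v)).trans (dotProduct_comm v (star v))

theorem star_dotProduct_mul_star_dotProduct (u v : n → ℂ) :
    (star u ⬝ᵥ v) * (star v ⬝ᵥ u) = (‖star u ⬝ᵥ v‖ ^ 2 : ℝ) := by
  rw [Matrix.star_dotProduct v u, Complex.star_def, Complex.mul_conj, Complex.normSq_eq_norm_sq]

theorem trace_pureState_mul_pureState (u v : n → ℂ) :
    (pureState u * pureState v).trace = (‖star u ⬝ᵥ v‖ ^ 2 : ℝ) := by
  rw [pureState_mul_pureState, Matrix.trace_smul, Matrix.trace_vecMulVec, dotProduct_comm u,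
    smul_eq_mul, star_dotProduct_mul_star_dotProduct]

theorem pureState_mul_pureState_mul_pureState (u v : n → ℂ) :
    pureState u * pureState v * pureState u = ‖star u ⬝ᵥ v‖ ^ 2 • pureState u := by
  have h_mul : Matrix.vecMulVec u (star v) * pureState u = (star v ⬝ᵥ u) • pureState u := by
    rw [pureState_eq_vecMulVec, Matrix.vecMulVec_mul_vecMulVec, Matrix.vecMulVec_smul]
  rw [pureState_mul_pureState, smul_mul_assoc, h_mul, smul_smul,
    star_dotProduct_mul_star_dotProduct, Complex.coe_smul]

theorem pureState_sub_mul_sub_mul_sub {u v : n → ℂ}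
    (hu : star u ⬝ᵥ u = 1) (hv : star v ⬝ᵥ v = 1) :
    (pureState u - pureState v) * (pureState u - pureState v) * (pureState u - pureState v) =
      (1 - ‖star v ⬝ᵥ u‖ ^ 2) • (pureState u - pureState v) := by
  rw [sub_mul_sub_mul_sub_of_isIdempotentElem (isIdempotentElem_pureState hu)
    (isIdempotentElem_pureState hv), pureState_mul_pureState_mul_pureState,
    pureState_mul_pureState_mul_pureState, norm_star_dotProduct_comm u v]
  module

theorem trace_pureState_sub_mul_self {u v : n → ℂ}
    (hu : star u ⬝ᵥ u = 1) (hv : star v ⬝ᵥ v = 1) :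
    ((pureState u - pureState v) * (pureState u - pureState v)).trace =
      (2 * (1 - ‖star v ⬝ᵥ u‖ ^ 2) : ℝ) := by
  simp only [sub_mul, mul_sub, Matrix.trace_sub, (isIdempotentElem_pureState hu).eq,
    (isIdempotentElem_pureState hv).eq, trace_pureState, trace_pureState_mul_pureState, hu, hv,
    norm_star_dotProduct_comm u v]
  push_cast
  ring

theorem traceNorm_pureState_sub [DecidableEq n] {u v : n → ℂ}
    (hu : star u ⬝ᵥ u = 1) (hv : star v ⬝ᵥ v = 1) :
    traceNorm (pureState u - pureState v) = 2 * √(1 - ‖star v ⬝ᵥ u‖ ^ 2) := by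
  have h_adj : (pureState u - pureState v)ᴴ = pureState u - pureState v :=
    ((isHermitian_pureState u).sub (isHermitian_pureState v)).eq
  have h_cube := pureState_sub_mul_sub_mul_sub hu hv
  nth_rw 2 [← h_adj] at h_cube
  rw [traceNorm_eq_of_mul_conjTranspose_mul_self h_cube, h_adj,
    trace_pureState_sub_mul_self hu hv, Complex.ofReal_re, mul_div_assoc, Real.div_sqrt]

end PureStates

section Normalization

variable {n : Type*} [Fintype n]

/-- The normalization `v / ‖v‖` of a vector with respect to the Euclidean norm, used for the state
`|t'⟩`; by the convention `0⁻¹ = 0` the normalization of `0` is `0`. -/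
def normalized (v : n → ℂ) : n → ℂ :=
  (√(∑ y, Complex.normSq (v y)) : ℂ)⁻¹ • v

theorem star_dotProduct_self (v : n → ℂ) :
    star v ⬝ᵥ v = (∑ y, Complex.normSq (v y) : ℝ) := by
  simp [dotProduct, Complex.normSq_eq_conj_mul_self]

theorem sum_normSq_nonneg (v : n → ℂ) : 0 ≤ ∑ y, Complex.normSq (v y) :=
  Finset.sum_nonneg fun y _ => Complex.normSq_nonneg (v y)

theorem star_dotProduct_normalized (u v : n → ℂ) :
    star u ⬝ᵥ normalized v = (√(∑ y, Complex.normSq (v y)) : ℂ)⁻¹ * (star u ⬝ᵥ v) := by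
  rw [normalized, dotProduct_smul, smul_eq_mul]

theorem norm_star_dotProduct_normalized_sq (u v : n → ℂ) :
    ‖star u ⬝ᵥ normalized v‖ ^ 2 = ‖star u ⬝ᵥ v‖ ^ 2 / ∑ y, Complex.normSq (v y) := by
  rw [star_dotProduct_normalized, norm_mul, norm_inv, Complex.norm_real, mul_pow, inv_pow,
    Real.norm_eq_abs, sq_abs, Real.sq_sqrt (sum_normSq_nonneg v), inv_mul_eq_div]

theorem star_normalized_dotProduct_normalized {v : n → ℂ} (hv : v ≠ 0) :
    star (normalized v) ⬝ᵥ normalized v = 1 := by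
  have h_ne : star v ⬝ᵥ v ≠ 0 := dotProduct_star_self_eq_zero.not.mpr hv
  have h_pos : 0 < ∑ y, Complex.normSq (v y) := by
    rw [star_dotProduct_self, Complex.ofReal_ne_zero] at h_ne
    exact (sum_normSq_nonneg v).lt_of_ne' h_ne
  have h_inv_mul : (√(∑ y, Complex.normSq (v y)))⁻¹ * ∑ y, Complex.normSq (v y) =
      √(∑ y, Complex.normSq (v y)) := by
    rw [inv_mul_eq_div, Real.div_sqrt]
  rw [star_dotProduct_normalized, Matrix.star_dotProduct, star_dotProduct_normalized,
    star_dotProduct_self, Complex.star_def, ← Complex.ofReal_inv, ← Complex.ofReal_mul,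
    Complex.conj_ofReal, ← Complex.ofReal_mul, h_inv_mul,
    inv_mul_cancel₀ (Real.sqrt_ne_zero'.mpr h_pos), Complex.ofReal_one]

end Normalization

section UpCount

/-- The number of up spins of a configuration, with `true` standing for `|↑⟩`. Under the uniform
distribution on configurations it is binomial with parameters `N` and `1/2`. -/
def upCount {N : ℕ} (x : Fin N → Bool) : ℕ := ∑ k, (x k).toNat

theorem upCount_cons {N : ℕ} (b : Bool) (x : Fin N → Bool) :
    upCount (Fin.cons b x : Fin (N + 1) → Bool) = b.toNat + upCount x := by
  simp only [upCount, Fin.sum_univ_succ, Fin.cons_zero, Fin.cons_succ]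

open Finset

theorem expect_pi_fin_succ {M : Type*} [AddCommMonoid M] [Module ℚ≥0 M] {N : ℕ}
    {α : Fin (N + 1) → Type*} [∀ i, Fintype (α i)] (f : (∀ i, α i) → M) :
    𝔼 x, f x = 𝔼 a, 𝔼 x : ∀ i : Fin N, α i.succ, f (Fin.cons a x) := by
  rw [← Fintype.expect_equiv (Fin.consEquiv α) (fun p => f (Fin.cons p.1 p.2)) f fun _ => rfl,
    ← univ_product_univ, expect_product]

variable {K : Type*} [Field K] [CharZero K]

theorem expect_bool (f : Bool → K) : 𝔼 b, f b = (f true + f false) / 2 := by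
  rw [Fintype.expect_eq_sum_div_card, Fintype.sum_bool, Fintype.card_bool, Nat.cast_ofNat]

theorem expect_upCount (N : ℕ) : 𝔼 x : Fin N → Bool, (upCount x : K) = N / 2 := by
  induction N with
  | zero => simp [upCount]
  | succ N ih =>
    simp only [expect_pi_fin_succ, expect_bool, upCount_cons, Bool.toNat_true, Bool.toNat_false,
      Nat.cast_add, Nat.cast_one, expect_add_distrib, Fintype.expect_const, ih]
    ring

theorem expect_upCount_sq (N : ℕ) :
    𝔼 x : Fin N → Bool, (upCount x : K) ^ 2 = N * (N + 1) / 4 := by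
  induction N with
  | zero => simp [upCount]
  | succ N ih =>
    simp only [expect_pi_fin_succ, expect_bool, upCount_cons, Bool.toNat_true, Bool.toNat_false,
      Nat.cast_add, Nat.cast_one, add_sq, one_pow, mul_one, expect_add_distrib, ← mul_expect,
      Fintype.expect_const, expect_upCount, ih]
    ring

end UpCount

section RaisedCoherentState

theorem extendAt_mulVec (k : Fin N) (A : Matrix (d k) (d k) ℂ) (v : (∀ j, d j) → ℂ)
    (x : ∀ j, d j) :
    (extendAt k A *ᵥ v) x = ∑ b, A (x k) b * v (Function.update x k b) := by
  refine (Fintype.sum_of_injective _ (Function.update_injective x k) _ _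
    (fun y hy => ?_) fun b => ?_).symm
  · have h_off : ¬∀ j, j ≠ k → x j = y j := fun h =>
      hy ⟨y k, Function.update_eq_iff.mpr ⟨rfl, h⟩⟩
    simp only [extendAt, Matrix.of_apply, if_neg h_off, zero_mul]
  · have h_off : ∀ j, j ≠ k → x j = Function.update x k b j := fun j hj =>
      (Function.update_of_ne hj b x).symm
    simp only [extendAt, Matrix.of_apply, if_pos h_off, Function.update_self]

theorem extendAt_sigmaPlus_mulVec (k : Fin N) (v : (Fin N → Bool) → ℂ) (x : Fin N → Bool) :
    (extendAt (d := fun _ : Fin N => Bool) k sigmaPlus *ᵥ v) x =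
      if x k then v (Function.update x k false) else 0 := by
  rw [extendAt_mulVec]
  cases x k <;> simp [sigmaPlus]

/-- The unnormalized raised state `∑ₖ σ₊⁽ᵏ⁾ |t⟩`, where `|t⟩` is the coherent half-up state. -/
def raisedCoherent (N : ℕ) : (Fin N → Bool) → ℂ :=
  (∑ k, extendAt (d := fun _ : Fin N => Bool) k sigmaPlus) *ᵥ coherentHalfUp N

theorem raisedCoherent_eq_upCount_mul (N : ℕ) :
    raisedCoherent N = (fun x => (upCount x : ℂ)) * coherentHalfUp N := by
  ext x
  have h_site (k : Fin N) :
      (extendAt (d := fun _ : Fin N => Bool) k sigmaPlus *ᵥ coherentHalfUp N) x =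
        (x k).toNat * coherentHalfUp N x := by
    rw [extendAt_sigmaPlus_mulVec]
    cases x k <;> simp [coherentHalfUp]
  simp only [raisedCoherent, Matrix.sum_mulVec, Finset.sum_apply, h_site, upCount,
    Pi.mul_apply, Nat.cast_sum, Finset.sum_mul]

open Finset

theorem star_mul_coherentHalfUp_dotProduct {N : ℕ} (f g : (Fin N → Bool) → ℂ) :
    star (f * coherentHalfUp N) ⬝ᵥ (g * coherentHalfUp N) = 𝔼 x, star (f x) * g x := by
  have h_amp : star (((√2 : ℝ) : ℂ)⁻¹ ^ N) * ((√2 : ℝ) : ℂ)⁻¹ ^ N = (2 ^ N)⁻¹ := by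
    simp [← mul_pow, ← mul_inv, ← Complex.ofReal_mul]
  rw [Fintype.expect_eq_sum_div_card, div_eq_mul_inv, sum_mul]
  refine sum_congr rfl fun x _ => ?_
  simp only [Pi.star_apply, Pi.mul_apply, star_mul', coherentHalfUp]
  rw [mul_mul_mul_comm, h_amp]
  simp

theorem star_coherentHalfUp_dotProduct_self (N : ℕ) :
    star (coherentHalfUp N) ⬝ᵥ coherentHalfUp N = 1 := by
  simpa using star_mul_coherentHalfUp_dotProduct (N := N) 1 1

theorem star_coherentHalfUp_dotProduct_raisedCoherent (N : ℕ) :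
    star (coherentHalfUp N) ⬝ᵥ raisedCoherent N = N / 2 := by
  rw [raisedCoherent_eq_upCount_mul, ← expect_upCount]
  simpa using star_mul_coherentHalfUp_dotProduct 1 fun x : Fin N → Bool => (upCount x : ℂ)

theorem star_raisedCoherent_dotProduct_self (N : ℕ) :
    star (raisedCoherent N) ⬝ᵥ raisedCoherent N = N * (N + 1) / 4 := by
  rw [raisedCoherent_eq_upCount_mul, star_mul_coherentHalfUp_dotProduct, ← expect_upCount_sq]
  simp only [star_natCast, sq]

theorem raisedCoherent_ne_zero {N : ℕ} (hN : N ≠ 0) : raisedCoherent N ≠ 0 := by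
  rw [Ne, ← dotProduct_star_self_eq_zero, star_raisedCoherent_dotProduct_self]
  simp [hN, Nat.cast_add_one_ne_zero]

theorem norm_star_coherentHalfUp_dotProduct_normalized_raisedCoherent_sq (N : ℕ) :
    ‖star (coherentHalfUp N) ⬝ᵥ normalized (raisedCoherent N)‖ ^ 2 = N / (N + 1 : ℝ) := by
  have h_normSq : ∑ y, Complex.normSq (raisedCoherent N y) = N * (N + 1) / 4 := by
    apply Complex.ofReal_injective
    rw [← star_dotProduct_self, star_raisedCoherent_dotProduct_self]
    push_cast
    rfl
  rw [norm_star_dotProduct_normalized_sq, h_normSq, star_coherentHalfUp_dotProduct_raisedCoherent]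
  simp only [norm_div, Complex.norm_natCast, Complex.norm_ofNat]
  field_simp
  norm_num

end RaisedCoherentState

/-- Let `|t⟩ = ((|↑⟩+|↓⟩)/√2)^{⊗N}` (`N ≥ 1`) and let `|t'⟩` be the
normalization of `Σ_k σ₊^{(k)} |t⟩`. Then `|⟨t|t'⟩|² = N/(N+1)`, and the trace distance
between the corresponding pure states is `(1/2)·‖|t'⟩⟨t'| − |t⟩⟨t|‖₁ = 1/√(N+1)`. -/
theorem raised_coherent_overlap_and_trace_distance
    {N : ℕ} (hN : 1 ≤ N)
    (w : (Fin N → Bool) → ℂ)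
    (hw : w = (∑ k, extendAt (d := fun _ : Fin N => Bool) k sigmaPlus).mulVec
      (coherentHalfUp N))
    (t' : (Fin N → Bool) → ℂ)
    (ht' : t' = fun x => ((Real.sqrt (∑ y, Complex.normSq (w y)) : ℂ))⁻¹ * w x) :
    ‖∑ x, (starRingEnd ℂ) (coherentHalfUp N x) * t' x‖ ^ 2 =
        (N : ℝ) / ((N : ℝ) + 1) ∧
      (1 / 2 : ℝ) * traceNorm (pureState t' - pureState (coherentHalfUp N)) =
        1 / Real.sqrt ((N : ℝ) + 1) := by
  have h_normalized : t' = normalized (raisedCoherent N) := by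
    rw [ht', hw]
    rfl
  have h_overlap : ‖star (coherentHalfUp N) ⬝ᵥ t'‖ ^ 2 = (N : ℝ) / (N + 1) := by
    rw [h_normalized, norm_star_coherentHalfUp_dotProduct_normalized_raisedCoherent_sq]
  have h_unit : star t' ⬝ᵥ t' = 1 := by
    rw [h_normalized, star_normalized_dotProduct_normalized
      (raisedCoherent_ne_zero (Nat.one_le_iff_ne_zero.mp hN))]
  refine ⟨h_overlap, ?_⟩
  have h_one_sub : 1 - (N : ℝ) / (N + 1) = 1 / (N + 1) := by
    field_simp
    ring
  rw [traceNorm_pureState_sub h_unit (star_coherentHalfUp_dotProduct_self N), h_overlap,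
    h_one_sub, Real.sqrt_div zero_le_one, Real.sqrt_one]
  ring

end Paper
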